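/- Let $G_n = a_1(n)\alpha_1^n + \cdots + a_d(n)\alpha_d^n$ and $H_m = b_1(m)\beta_1^m + \cdots + b_t(m)\beta_t^m$ be two non-degenerate linear recurrence sequences of polynomials in $\mathbb{C}[x]$ whose characteristic roots $\alpha_i, \beta_j$ are polynomials in $\mathbb{C}[x]$ as well. Assume that $\alpha_1 \notin \mathbb{C}$, that for every $j \in \{1,\ldots,t\}$ the pair $(\alpha_1, \beta_j)$ is multiplicatively independent, and that $\deg \alpha_1 \ge \deg \alpha_i$ for all $i \in \{1,\ldots,d\}$. Fix nonzero $a, b \in \mathbb{C}[x]$. Then there exist effectively computable constants $c_0$ and $C$, independent of $n$ and $m$, such that for all pairs $(n,m)$ of non-negative integers with $\min\{n,m\} > c_0$ one has $\deg(a G_n - b H_m) \ge \deg G_n - C$. -/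

import Mathlib

/-!
STATEMENT 2: The corollary of Theorem 1 for linear recurrence sequences of
polynomials in `ℂ[x]` whose characteristic roots are polynomials as well:
`deg (a Gₙ - b Hₘ) ≥ deg Gₙ - C` for `min {n, m} > c₀`
(with the convention `deg 0 = -∞`, formalized via `Polynomial.degree` in
`WithBot ℕ` and the equivalent inequality `deg Gₙ ≤ deg (a Gₙ - b Hₘ) + C`).
-/

/-- A rational function is constant, i.e. lies in `ℂ`. -/
def RatIsConst (f : RatFunc ℂ) : Prop :=
  f ∈ Set.range (RatFunc.C : ℂ →+* RatFunc ℂ)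

/-- Two polynomials `p, q ∈ ℂ[x]`, viewed in `ℂ(x)`, are multiplicatively
independent: `p^r q^s ∈ ℂ` forces `r = s = 0`. -/
def PolyMultIndep (p q : Polynomial ℂ) : Prop :=
  ∀ r s : ℤ,
    RatIsConst ((algebraMap (Polynomial ℂ) (RatFunc ℂ) p) ^ r *
      (algebraMap (Polynomial ℂ) (RatFunc ℂ) q) ^ s) → r = 0 ∧ s = 0

/-!
Write `a * G n - b * H m` as a sum of terms `f i = p i * γ i ^ k i` with `p i` of bounded degree, so
that `f i` and its first derivatives are all divisible by a power of `γ i` of almost the same degree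
as `f i`. Given a minimal linear relation among the `f i`, replace a row of a Wronskian by means of
it: any two powers of the roots occurring in it turn out to have a common multiple exceeding
them by a bounded degree only. When the exponents are large, comparing the multiplicities of
irreducible factors shows that this is impossible for the powers `α 0 ^ n` and `α i ^ n`, since the
roots are not associated, and for `α 0 ^ n` and `β j ^ m`, since the roots are multiplicatively
independent. So the term of `α 0` lies outside the span of the others, and the same Wronskian
argument applied to the whole sum bounds the degree of this term by that of the sum.
-/

open Polynomial

section Determinant

variable {ι R : Type*} [Fintype ι] [DecidableEq ι] [CommRing R]

theorem prod_dvd_det {M : Matrix ι ι R} {g : ι → R} (hg : ∀ i j, g i ∣ M i j) :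
    ∏ i, g i ∣ M.det := by
  rw [Matrix.det_apply]
  refine Finset.dvd_sum fun σ _ => dvd_smul_of_dvd _ ?_
  rw [← Equiv.prod_comp σ]
  exact Finset.prod_dvd_prod_of_dvd _ _ fun i _ => hg _ _

theorem natDegree_det_le_sum {M : Matrix ι ι R[X]} {w : ι → ℕ}
    (hM : ∀ i j, (M i j).natDegree ≤ w i) : M.det.natDegree ≤ ∑ i, w i := by
  rw [Matrix.det_apply]
  refine natDegree_sum_le_of_forall_le _ _ fun σ _ => (natDegree_smul_le _ _).trans ?_
  rw [← Equiv.sum_comp σ]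
  exact (natDegree_prod_le _ _).trans (Finset.sum_le_sum fun i _ => hM _ _)

end Determinant

section Wronskian

/-- The Wronskian determinant of a finite sequence of polynomials, with the functions indexing the
rows and the order of differentiation indexing the columns. `Polynomial.wronskian` is the case of
two polynomials. -/
noncomputable def wronskianDet {R : Type*} [CommRing R] {n : ℕ} (f : Fin n → R[X]) : R[X] :=
  (Matrix.of fun i j : Fin n => derivative^[(j : ℕ)] (f i)).det

section CommRing

variable {R : Type*} [CommRing R] {n : ℕ}

theorem natDegree_wronskianDet_le (f : Fin n → R[X]) :
    (wronskianDet f).natDegree ≤ ∑ i, (f i).natDegree :=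
  natDegree_det_le_sum fun _ _ => (natDegree_iterate_derivative _ _).trans (Nat.sub_le _ _)

theorem prod_dvd_wronskianDet {f g : Fin n → R[X]}
    (hg : ∀ i, ∀ j < n, g i ∣ derivative^[j] (f i)) : ∏ i, g i ∣ wronskianDet f :=
  prod_dvd_det fun i j => hg i j j.isLt

theorem wronskianDet_update_sum (f : Fin n → R[X]) (c : Fin n → R) (i₀ : Fin n) :
    wronskianDet (Function.update f i₀ (∑ i, c i • f i)) = C (c i₀) * wronskianDet f := by
  rw [wronskianDet, wronskianDet, ← smul_eq_mul, ← Matrix.det_updateRow_sum _ i₀ fun i => C (c i)]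
  congr 1
  ext1 i j
  obtain rfl | hi := eq_or_ne i i₀
  · simp [iterate_derivative_sum, smul_eq_C_mul]
  · simp [hi]

theorem sum_wronskian_mul_iterate_derivative_eq_zero {ι : Type*} {s : Finset ι} {f v : ι → R[X]}
    {k : ℕ} (hk : ∑ i ∈ s, v i * derivative^[k] (f i) = 0)
    (hk' : ∑ i ∈ s, v i * derivative^[k + 1] (f i) = 0) (u : R[X]) :
    ∑ i ∈ s, wronskian u (v i) * derivative^[k] (f i) = 0 := by
  have hderiv : ∑ i ∈ s, derivative (v i) * derivative^[k] (f i) = 0 := by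
    simpa only [derivative_sum, derivative_mul, ← Function.iterate_succ_apply' (⇑derivative),
      Finset.sum_add_distrib, hk', add_zero, derivative_zero] using congrArg derivative hk
  calc ∑ i ∈ s, wronskian u (v i) * derivative^[k] (f i)
      = u * ∑ i ∈ s, derivative (v i) * derivative^[k] (f i)
        - derivative u * ∑ i ∈ s, v i * derivative^[k] (f i) := by
        simp only [wronskian, sub_mul, Finset.sum_sub_distrib, Finset.mul_sum, mul_assoc]
    _ = 0 := by rw [hderiv, hk, mul_zero, mul_zero, sub_zero]

end CommRing

variable {K : Type*} [Field K] [CharZero K]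

theorem exists_eq_C_mul_of_wronskian_eq_zero {u v : K[X]} (hu : u ≠ 0) (h : wronskian u v = 0) :
    ∃ c : K, v = C c * u := by
  obtain ⟨u', v', g, hrel, rfl, rfl⟩ := UniqueFactorizationMonoid.exists_reduced_factors u hu v
  have hg : g ≠ 0 := left_ne_zero_of_mul hu
  have hfactor : wronskian (g * u') (g * v') = g ^ 2 * wronskian u' v' := by
    simp only [wronskian, derivative_mul]
    ring
  have hred : wronskian u' v' = 0 :=
    (mul_eq_zero.mp (hfactor.symm.trans h)).resolve_left (pow_ne_zero 2 hg)
  obtain ⟨hu', hv'⟩ := hrel.isCoprime.wronskian_eq_zero_iff.mp hred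
  obtain ⟨x, rfl⟩ : ∃ x, u' = C x := ⟨_, eq_C_of_derivative_eq_zero hu'⟩
  obtain ⟨y, rfl⟩ : ∃ y, v' = C y := ⟨_, eq_C_of_derivative_eq_zero hv'⟩
  have hx : x ≠ 0 := by
    rintro rfl
    simp at hu
  exact ⟨y / x, by rw [mul_left_comm, ← C_mul, div_mul_cancel₀ y hx]⟩

theorem eq_zero_of_sum_mul_iterate_derivative_eq_zero {n : ℕ} {f v : Fin n → K[X]}
    (hf : LinearIndependent K f) (hv : ∀ j < n, ∑ i, v i * derivative^[j] (f i) = 0) : v = 0 := by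
  induction n with
  | zero => exact Subsingleton.elim _ _
  | succ n ih =>
    by_contra hne
    obtain ⟨i₀, hi₀⟩ := Function.ne_iff.mp hne
    have hwronskian : ∀ i, wronskian (v i₀) (v i) = 0 := by
      have herase : (fun i => wronskian (v i₀) (v (i₀.succAbove i))) = 0 := by
        refine ih (f := f ∘ i₀.succAbove) (hf.comp _ Fin.succAbove_right_injective) fun j hj => ?_
        simpa [Fin.sum_univ_succAbove _ i₀, wronskian_self_eq_zero] using
          sum_wronskian_mul_iterate_derivative_eq_zero (hv j (by omega)) (hv (j + 1) (by omega))
            (v i₀)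
      intro i
      obtain rfl | ⟨j, rfl⟩ := Fin.eq_self_or_eq_succAbove i₀ i
      · exact wronskian_self_eq_zero _
      · exact congrFun herase j
    choose c hc using fun i => exists_eq_C_mul_of_wronskian_eq_zero hi₀ (hwronskian i)
    have hsum : ∑ i, c i • f i = 0 := by
      refine (mul_eq_zero.mp ?_).resolve_left hi₀
      rw [← hv 0 n.succ_pos, Finset.mul_sum]
      refine Finset.sum_congr rfl fun i _ => ?_
      rw [Function.iterate_zero_apply, hc i, smul_eq_C_mul]
      ring
    refine hi₀ ?_
    rw [hc i₀, Fintype.linearIndependent_iff.mp hf c hsum i₀, C_0, zero_mul, Pi.zero_apply]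

theorem wronskianDet_ne_zero {n : ℕ} {f : Fin n → K[X]} (hf : LinearIndependent K f) :
    wronskianDet f ≠ 0 := by
  intro hdet
  obtain ⟨v, hv0, hv⟩ := Matrix.exists_vecMul_eq_zero_iff.mpr hdet
  exact hv0 (eq_zero_of_sum_mul_iterate_derivative_eq_zero hf fun j hj =>
    congrFun hv ⟨j, hj⟩)

end Wronskian

section CommonMultiple

section CommRing

variable {R : Type*} [CommRing R] {n : ℕ}

theorem prod_erase_mul_dvd_wronskianDet_update {f g : Fin n → R[X]} {i₀ : Fin n} {σ h : R[X]}
    (hg : ∀ i, ∀ j < n, g i ∣ derivative^[j] (f i)) (hh : ∀ j < n, h ∣ derivative^[j] σ) :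
    (∏ i ∈ Finset.univ.erase i₀, g i) * h ∣ wronskianDet (Function.update f i₀ σ) := by
  have hprod : (∏ i ∈ Finset.univ.erase i₀, g i) * h = ∏ i, Function.update g i₀ h i := by
    rw [Finset.prod_update_of_mem (Finset.mem_univ i₀), Finset.sdiff_singleton_eq_erase, mul_comm]
  rw [hprod]
  refine prod_dvd_wronskianDet fun i j hj => ?_
  obtain rfl | hi := eq_or_ne i i₀
  · simpa using hh j hj
  · simpa [hi] using hg i j hj

theorem natDegree_wronskianDet_update_le [IsDomain R] {f g : Fin n → R[X]} {B : ℕ} {i₀ : Fin n}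
    {σ : R[X]} (hg₀ : ∀ i, g i ≠ 0) (hB : ∀ i, (f i).natDegree ≤ (g i).natDegree + B) :
    (wronskianDet (Function.update f i₀ σ)).natDegree ≤
      (∏ i ∈ Finset.univ.erase i₀, g i).natDegree + σ.natDegree + (n - 1) * B := by
  calc (wronskianDet (Function.update f i₀ σ)).natDegree
      ≤ ∑ i, (Function.update f i₀ σ i).natDegree := natDegree_wronskianDet_le _
    _ = σ.natDegree + ∑ i ∈ Finset.univ.erase i₀, (f i).natDegree := by
        rw [← Finset.add_sum_erase _ _ (Finset.mem_univ i₀), Function.update_self]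
        congr 1
        refine Finset.sum_congr rfl fun i hi => ?_
        rw [Function.update_of_ne (Finset.ne_of_mem_erase hi)]
    _ ≤ σ.natDegree + ∑ i ∈ Finset.univ.erase i₀, ((g i).natDegree + B) := by
        gcongr with i
        exact hB i
    _ = (∏ i ∈ Finset.univ.erase i₀, g i).natDegree + σ.natDegree + (n - 1) * B := by
        rw [natDegree_prod _ _ fun i _ => hg₀ i, Finset.sum_add_distrib, Finset.sum_const,
          Finset.card_erase_of_mem (Finset.mem_univ i₀), Finset.card_fin, smul_eq_mul]
        ring

end CommRing

variable {K : Type*} [Field K] [CharZero K] {n : ℕ}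

-- The Wronskian of the `f i` is, up to a constant, also the one with `f i₀` replaced by the linear
-- combination; removing the factors `g i` with `i ≠ i₀` from it leaves the common multiple.
theorem exists_common_multiple_of_sum_fin {f g : Fin n → K[X]} {B : ℕ} {c : Fin n → K} {i₀ : Fin n}
    {h : K[X]} (hf : LinearIndependent K f) (hg : ∀ i, ∀ j < n, g i ∣ derivative^[j] (f i))
    (hB : ∀ i, (f i).natDegree ≤ (g i).natDegree + B) (hc : c i₀ ≠ 0)
    (hh : ∀ j < n, h ∣ derivative^[j] (∑ i, c i • f i)) :
    ∃ V ≠ 0, g i₀ ∣ V ∧ h ∣ V ∧ V.natDegree ≤ (g i₀).natDegree + n * B ∧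
      V.natDegree ≤ (∑ i, c i • f i).natDegree + n * B := by
  have hn : n - 1 + 1 = n := Nat.succ_pred_eq_of_pos i₀.pos
  have hW := wronskianDet_ne_zero hf
  have hg₀ : ∀ i, g i ≠ 0 := fun i => ne_zero_of_dvd_ne_zero (hf.ne_zero i) (hg i 0 i₀.pos)
  set P := ∏ i ∈ Finset.univ.erase i₀, g i
  have hP₀ : P ≠ 0 := Finset.prod_ne_zero_iff.mpr fun i _ => hg₀ i
  have hdvd_g : P * g i₀ ∣ wronskianDet f := by
    simpa using prod_erase_mul_dvd_wronskianDet_update (i₀ := i₀) hg (hg i₀)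
  have hdvd_h : P * h ∣ wronskianDet f := by
    have hdvd := prod_erase_mul_dvd_wronskianDet_update (i₀ := i₀) hg hh
    rwa [wronskianDet_update_sum, (isUnit_C.mpr hc.isUnit).dvd_mul_left] at hdvd
  have hdeg_g : (wronskianDet f).natDegree ≤ P.natDegree + (f i₀).natDegree + (n - 1) * B := by
    simpa using natDegree_wronskianDet_update_le (i₀ := i₀) (σ := f i₀) hg₀ hB
  have hdeg_σ : (wronskianDet f).natDegree ≤
      P.natDegree + (∑ i, c i • f i).natDegree + (n - 1) * B := by
    simpa [wronskianDet_update_sum, natDegree_C_mul hc] using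
      natDegree_wronskianDet_update_le (i₀ := i₀) (σ := ∑ i, c i • f i) hg₀ hB
  obtain ⟨V, hV⟩ := dvd_of_mul_right_dvd hdvd_g
  rw [hV] at hW hdvd_g hdvd_h hdeg_g hdeg_σ
  have hV₀ : V ≠ 0 := right_ne_zero_of_mul hW
  rw [natDegree_mul hP₀ hV₀] at hdeg_g hdeg_σ
  have hmul : n * B = (n - 1) * B + B := by rw [← Nat.succ_mul, Nat.succ_eq_add_one, hn]
  have hB₀ := hB i₀
  exact ⟨V, hV₀, (mul_dvd_mul_iff_left hP₀).mp hdvd_g, (mul_dvd_mul_iff_left hP₀).mp hdvd_h,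
    by omega, by omega⟩

theorem exists_common_multiple_of_sum {ι : Type*} {s : Finset ι} {f g : ι → K[X]} {B : ℕ}
    {c : ι → K} {i₀ : ι} {h : K[X]} (hf : LinearIndepOn K f (s : Set ι))
    (hg : ∀ i ∈ s, ∀ j < s.card, g i ∣ derivative^[j] (f i))
    (hB : ∀ i ∈ s, (f i).natDegree ≤ (g i).natDegree + B) (hi₀ : i₀ ∈ s) (hc : c i₀ ≠ 0)
    (hh : ∀ j < s.card, h ∣ derivative^[j] (∑ i ∈ s, c i • f i)) :
    ∃ V ≠ 0, g i₀ ∣ V ∧ h ∣ V ∧ V.natDegree ≤ (g i₀).natDegree + s.card * B ∧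
      V.natDegree ≤ (∑ i ∈ s, c i • f i).natDegree + s.card * B := by
  let e : Fin s.card ≃ s := s.equivFin.symm
  have hsum : ∑ i ∈ s, c i • f i = ∑ k, c (e k) • f (e k) := by
    rw [← Finset.sum_coe_sort, ← Equiv.sum_comp e]
  have hcommon := exists_common_multiple_of_sum_fin (f := fun k => f (e k)) (g := fun k => g (e k))
    (c := fun k => c (e k)) (i₀ := e.symm ⟨i₀, hi₀⟩) (hf.comp e e.injective)
    (fun k => hg _ (e k).2) (fun k => hB _ (e k).2) (by simpa using hc) (by rwa [← hsum])
  simpa [← hsum] using hcommon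

end CommonMultiple

section NearlyAssociated

variable {K : Type*} [Field K]

/-- Two nonzero polynomials agree up to factors of degree at most `E`: they have a nonzero common
multiple whose degree exceeds each of theirs by at most `E`. For `E = 0` this is `Associated`. -/
def NearlyAssociated (E : ℕ) (p q : K[X]) : Prop :=
  ∃ V ≠ 0, p ∣ V ∧ q ∣ V ∧ V.natDegree ≤ p.natDegree + E ∧ V.natDegree ≤ q.natDegree + E

theorem NearlyAssociated.symm {E : ℕ} {p q : K[X]} (h : NearlyAssociated E p q) :
    NearlyAssociated E q p := by
  obtain ⟨V, hV, hp, hq, hdp, hdq⟩ := h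
  exact ⟨V, hV, hq, hp, hdq, hdp⟩

theorem NearlyAssociated.ne_zero {E : ℕ} {p q : K[X]} (h : NearlyAssociated E p q) : p ≠ 0 := by
  obtain ⟨V, hV, hp, -⟩ := h
  exact ne_zero_of_dvd_ne_zero hV hp

variable [CharZero K] {ι : Type*} [Fintype ι]

theorem notMem_span_of_not_nearlyAssociated {f g : ι → K[X]} {B : ℕ} {i₀ : ι} {s : Finset ι}
    (hg : ∀ i, ∀ j < Fintype.card ι, g i ∣ derivative^[j] (f i))
    (hB : ∀ i, (f i).natDegree ≤ (g i).natDegree + B) (hf₀ : f i₀ ≠ 0)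
    (hnear : ∀ i ∈ s, ¬ NearlyAssociated ((Fintype.card ι + 1) * B) (g i₀) (g i))
    (hs : LinearIndepOn K f (s : Set ι)) : f i₀ ∉ Submodule.span K (f '' s) := by
  intro hmem
  obtain ⟨c, hc⟩ := (Submodule.mem_span_image_finset_iff_exists_fun' K).mp hmem
  obtain ⟨i, hi, hci⟩ : ∃ i ∈ s, c i ≠ 0 := by
    by_contra! hzero
    refine hf₀ (hc.symm.trans (Finset.sum_eq_zero fun i hi => ?_))
    rw [hzero i hi, zero_smul]
  have hcard : s.card ≤ Fintype.card ι := s.card_le_univ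
  obtain ⟨V, hV, hdvd, hdvd₀, hdeg, hdeg₀⟩ := exists_common_multiple_of_sum hs
    (fun i _ j hj => hg i j (hj.trans_le hcard)) (fun i _ => hB i) hi hci
    (h := g i₀) (fun j hj => by rw [hc]; exact hg i₀ j (hj.trans_le hcard))
  rw [hc] at hdeg₀
  have hmul : s.card * B ≤ Fintype.card ι * B := Nat.mul_le_mul_right B hcard
  have hB₀ := hB i₀
  refine hnear i hi ⟨V, hV, hdvd₀, hdvd, ?_, ?_⟩ <;> rw [add_one_mul] <;> omega

theorem natDegree_le_natDegree_sum_add {f g : ι → K[X]} {B : ℕ} {i₀ : ι}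
    (hg : ∀ i, ∀ j < Fintype.card ι, g i ∣ derivative^[j] (f i))
    (hB : ∀ i, (f i).natDegree ≤ (g i).natDegree + B) (hf₀ : f i₀ ≠ 0)
    (hnear : ∀ i ≠ i₀, ¬ NearlyAssociated ((Fintype.card ι + 1) * B) (g i₀) (g i)) :
    ∑ i, f i ≠ 0 ∧
      (f i₀).natDegree ≤ (∑ i, f i).natDegree + (Fintype.card ι + 1) * B := by
  classical
  obtain ⟨b, hb, -, hspan, hli⟩ := exists_linearIndepOn_extension (K := K) (v := f)
    (linearIndepOn_empty K f) (Set.empty_subset {i₀}ᶜ)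
  lift b to Finset ι using b.toFinite
  have hi₀ : i₀ ∉ b := fun h => hb h rfl
  have hnotMem := notMem_span_of_not_nearlyAssociated hg hB hf₀ (fun i hi => hnear i (hb hi)) hli
  have hrest : ∑ i ∈ Finset.univ.erase i₀, f i ∈ Submodule.span K (f '' b) :=
    Submodule.sum_mem _ fun i hi => hspan ⟨i, Finset.ne_of_mem_erase hi, rfl⟩
  have hsplit : f i₀ + ∑ i ∈ Finset.univ.erase i₀, f i = ∑ i, f i :=
    Finset.add_sum_erase _ _ (Finset.mem_univ i₀)
  refine ⟨fun hzero => hnotMem ?_, ?_⟩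
  · rw [eq_neg_of_add_eq_zero_left (hsplit.trans hzero)]
    exact neg_mem hrest
  obtain ⟨c, hc⟩ := (Submodule.mem_span_image_finset_iff_exists_fun' K).mp hrest
  have hsum : ∑ i ∈ insert i₀ b, Function.update c i₀ 1 i • f i = ∑ i, f i := by
    rw [Finset.sum_insert hi₀, Function.update_self, one_smul, ← hsplit, ← hc]
    congr 1
    refine Finset.sum_congr rfl fun i hi => ?_
    rw [Function.update_of_ne (ne_of_mem_of_not_mem hi hi₀)]
  have hcard : (insert i₀ b).card ≤ Fintype.card ι := Finset.card_le_univ _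
  obtain ⟨V, hV, hdvd, -, -, hdeg⟩ := exists_common_multiple_of_sum (s := insert i₀ b) (i₀ := i₀)
    (c := Function.update c i₀ 1) (h := 1) (by simpa using hli.insert hnotMem)
    (fun i _ j hj => hg i j (hj.trans_le hcard)) (fun i _ => hB i) (Finset.mem_insert_self _ _)
    (by simp) (fun _ _ => one_dvd _)
  rw [hsum] at hdeg
  have hmul : (insert i₀ b).card * B ≤ Fintype.card ι * B := Nat.mul_le_mul_right B hcard
  have hB₀ := hB i₀
  have hdeg₀ := natDegree_le_of_dvd hdvd hV
  rw [add_one_mul]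
  omega

end NearlyAssociated

section MulIndep

/-- Multiplicative independence up to units, with natural number exponents: no relation
`p ^ m ~ q ^ n` holds other than the one with `m = n = 0`. -/
def MulIndep {M : Type*} [Monoid M] (p q : M) : Prop :=
  ∀ m n : ℕ, Associated (p ^ m) (q ^ n) → m = 0 ∧ n = 0

theorem MulIndep.exists_factorization_mul_ne {M : Type*} [CommMonoidWithZero M]
    [UniqueFactorizationMonoid M] [NormalizationMonoid M] [DecidableEq M] {p q : M} (hp : p ≠ 0)
    (hq : q ≠ 0) (h : MulIndep p q) :
    ∃ x y, factorization p x * factorization q y ≠ factorization p y * factorization q x := by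
  have := nontrivial_of_ne p 0 hp
  by_contra! hall
  have hx : ∃ x, factorization p x ≠ 0 := by
    by_contra! hzero
    have hunit : Associated p 1 := associated_of_factorization_eq _ _ hp one_ne_zero (by
      rw [factorization_one]
      exact Finsupp.ext hzero)
    exact absurd (h 1 0 (by simpa using hunit)).1 Nat.one_ne_zero
  obtain ⟨x, hx⟩ := hx
  have hrel : Associated (p ^ factorization q x) (q ^ factorization p x) := by
    refine associated_of_factorization_eq _ _ (pow_ne_zero _ hp) (pow_ne_zero _ hq) ?_
    ext y
    simp only [factorization_pow, Finsupp.smul_apply, smul_eq_mul]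
    rw [hall x y, mul_comm]
  exact hx (h _ _ hrel).2

end MulIndep

section Factorization

variable {K : Type*} [Field K]

section DecidableEq

variable [DecidableEq K]

theorem factorization_le_natDegree (p π : K[X]) : factorization p π ≤ p.natDegree := by
  obtain rfl | hp := eq_or_ne p 0
  · simp
  rw [factorization_eq_count]
  by_cases hπ : π ∈ UniqueFactorizationMonoid.normalizedFactors p
  · have hirr := UniqueFactorizationMonoid.irreducible_of_normalized_factor π hπ
    have hdvd : π ^ (UniqueFactorizationMonoid.normalizedFactors p).count π ∣ p := by
      rw [← Multiset.prod_replicate]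
      exact (Multiset.prod_dvd_prod_of_le (Multiset.le_count_iff_replicate_le.mp le_rfl)).trans
        (UniqueFactorizationMonoid.prod_normalizedFactors hp).dvd
    calc (UniqueFactorizationMonoid.normalizedFactors p).count π
        ≤ (UniqueFactorizationMonoid.normalizedFactors p).count π * π.natDegree :=
          Nat.le_mul_of_pos_right _ hirr.natDegree_pos
      _ = (π ^ (UniqueFactorizationMonoid.normalizedFactors p).count π).natDegree :=
          (natDegree_pow _ _).symm
      _ ≤ p.natDegree := natDegree_le_of_dvd hdvd hp
  · simp [Multiset.count_eq_zero_of_notMem hπ]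

theorem NearlyAssociated.factorization_le {E : ℕ} {p q : K[X]} (h : NearlyAssociated E p q)
    (π : K[X]) : factorization p π ≤ factorization q π + E := by
  obtain ⟨V, hV, ⟨r, hr⟩, ⟨s, rfl⟩, -, hdeg⟩ := h
  obtain ⟨hq₀, hs₀⟩ := mul_ne_zero_iff.mp hV
  obtain ⟨hp₀, hr₀⟩ := mul_ne_zero_iff.mp (hr ▸ hV)
  have hfac : factorization q π + factorization s π = factorization p π + factorization r π := by
    rw [← Finsupp.add_apply, ← Finsupp.add_apply, ← factorization_mul hq₀ hs₀, hr,
      factorization_mul hp₀ hr₀]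
  have hs := factorization_le_natDegree s π
  rw [natDegree_mul hq₀ hs₀] at hdeg
  omega

theorem NearlyAssociated.abs_factorization_pow_sub_le {E m n : ℕ} {p q : K[X]}
    (h : NearlyAssociated E (p ^ m) (q ^ n)) (π : K[X]) :
    |(m * factorization p π - n * factorization q π : ℤ)| ≤ E := by
  have hle := h.factorization_le π
  have hge := h.symm.factorization_le π
  simp only [factorization_pow, Finsupp.smul_apply, smul_eq_mul] at hle hge
  rw [abs_le]
  zify at hle hge
  constructor <;> linarith

end DecidableEq

theorem NearlyAssociated.associated_of_pow {E n : ℕ} {p q : K[X]}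
    (h : NearlyAssociated E (p ^ n) (q ^ n)) (hn : E < n) : Associated p q := by
  classical
  have hn₀ : n ≠ 0 := by omega
  refine associated_of_factorization_eq p q (ne_zero_pow hn₀ h.ne_zero)
    (ne_zero_pow hn₀ h.symm.ne_zero) (Finsupp.ext fun π => ?_)
  have habs := h.abs_factorization_pow_sub_le π
  rw [← mul_sub, abs_mul, Nat.abs_cast] at habs
  have hlt : |(factorization p π - factorization q π : ℤ)| < 1 := by
    by_contra! hge
    nlinarith
  have hzero := Int.abs_lt_one_iff.mp hlt
  omega

theorem NearlyAssociated.le_of_mulIndep {E m n : ℕ} {p q : K[X]}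
    (h : NearlyAssociated E (p ^ m) (q ^ n)) (hn : n ≠ 0) (hpq : MulIndep p q) :
    m ≤ 2 * E * q.natDegree := by
  classical
  obtain rfl | hm := eq_or_ne m 0
  · exact Nat.zero_le _
  obtain ⟨x, y, hxy⟩ := hpq.exists_factorization_mul_ne (ne_zero_pow hm h.ne_zero)
    (ne_zero_pow hn h.symm.ne_zero)
  have hx := h.abs_factorization_pow_sub_le x
  have hy := h.abs_factorization_pow_sub_le y
  have hqx : (factorization q x : ℤ) ≤ q.natDegree := mod_cast factorization_le_natDegree q x
  have hqy : (factorization q y : ℤ) ≤ q.natDegree := mod_cast factorization_le_natDegree q y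
  have hdet : 1 ≤ |(factorization p x * factorization q y -
      factorization p y * factorization q x : ℤ)| :=
    Int.one_le_abs (sub_ne_zero.mpr (mod_cast hxy))
  have hbound : (m : ℤ) ≤ 2 * E * q.natDegree :=
    calc (m : ℤ)
        ≤ m * |(factorization p x * factorization q y -
            factorization p y * factorization q x : ℤ)| :=
          le_mul_of_one_le_right (Int.natCast_nonneg m) hdet
      _ = |(m * factorization p x - n * factorization q x : ℤ) * factorization q y -
            (m * factorization p y - n * factorization q y) * factorization q x| := by
          rw [← Nat.abs_cast m, ← abs_mul, Nat.abs_cast]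
          congr 1
          ring
      _ ≤ |(m * factorization p x - n * factorization q x : ℤ)| * factorization q y +
            |(m * factorization p y - n * factorization q y : ℤ)| * factorization q x := by
          refine (abs_sub _ _).trans_eq ?_
          rw [abs_mul, abs_mul, Nat.abs_cast, Nat.abs_cast]
      _ ≤ E * q.natDegree + E * q.natDegree := by gcongr
      _ = 2 * E * q.natDegree := by ring
  exact_mod_cast hbound

end Factorization

section EvalNatCast

theorem exists_natDegree_eval_natCast_le {R : Type*} [Semiring R] (A : R[X][X]) :
    ∃ D, ∀ n : ℕ, (A.eval (n : R[X])).natDegree ≤ D := by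
  refine ⟨A.support.sup fun k => (A.coeff k).natDegree, fun n => ?_⟩
  rw [eval_eq_sum, Polynomial.sum]
  refine natDegree_sum_le_of_forall_le _ _ fun k hk => ?_
  have hcast : ((n : R[X]) ^ k).natDegree = 0 := by rw [← Nat.cast_pow, natDegree_natCast]
  refine natDegree_mul_le.trans ?_
  rw [hcast, add_zero]
  exact Finset.le_sup (f := fun k => (A.coeff k).natDegree) hk

theorem exists_forall_eval_natCast_ne_zero {R : Type*} [CommRing R] [IsDomain R] [CharZero R]
    {p : R[X]} (hp : p ≠ 0) : ∃ c, ∀ n : ℕ, c < n → p.eval (n : R) ≠ 0 := by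
  have hfin : {n : ℕ | p.IsRoot n}.Finite :=
    (finite_setOfPred_isRoot hp).preimage Nat.cast_injective.injOn
  obtain ⟨c, hc⟩ := hfin.bddAbove
  exact ⟨c, fun n hn hroot => (hc hroot).not_gt hn⟩

end EvalNatCast

section ExpPoly

variable {ι : Type*} [Fintype ι]

/-- The exponential polynomial `∑ i, A i (k i) * γ i ^ k i` with roots `γ` and coefficients `A`.
Each summand has its own exponent `k i`, so that `a * G n - b * H m` is of this form. -/
noncomputable def expPoly {R : Type*} [Semiring R] (γ : ι → R[X]) (A : ι → R[X][X])
    (k : ι → ℕ) : R[X] :=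
  ∑ i, (A i).eval (k i : R[X]) * γ i ^ k i

theorem exists_natDegree_expPoly_le {R : Type*} [Semiring R] {γ : ι → R[X]} {d : ℕ}
    (hγ : ∀ i, (γ i).natDegree ≤ d) (A : ι → R[X][X]) :
    ∃ D, ∀ n : ℕ, (expPoly γ A fun _ => n).natDegree ≤ n * d + D := by
  choose D hD using fun i => exists_natDegree_eval_natCast_le (A i)
  refine ⟨∑ i, D i, fun n => natDegree_sum_le_of_forall_le _ _ fun i hi => ?_⟩
  calc ((A i).eval (n : R[X]) * γ i ^ n).natDegree
      ≤ D i + n * d :=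
        natDegree_mul_le_of_le (hD i n) (natDegree_pow_le_of_le n (hγ i))
    _ ≤ n * d + ∑ i, D i := by
        rw [add_comm]
        gcongr
        exact Finset.single_le_sum_of_canonicallyOrdered hi

theorem pow_sub_dvd_iterate_derivative_mul_pow {R : Type*} [CommSemiring R] (p q : R[X])
    {j N : ℕ} (hj : j ≤ N) (k : ℕ) : q ^ (k - N) ∣ derivative^[j] (p * q ^ k) :=
  (pow_dvd_pow q (Nat.sub_le_sub_left hj k)).trans
    (pow_sub_dvd_iterate_derivative_of_pow_dvd j (dvd_mul_left _ _))

theorem natDegree_mul_pow_le_natDegree_pow_sub_add {R : Type*} [Semiring R] [NoZeroDivisors R]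
    {p q : R[X]} {D N k : ℕ} (hp : p.natDegree ≤ D) (hk : N ≤ k) :
    (p * q ^ k).natDegree ≤ (q ^ (k - N)).natDegree + (D + N * q.natDegree) := by
  obtain ⟨l, rfl⟩ := Nat.exists_eq_add_of_le hk
  calc (p * q ^ (N + l)).natDegree
      ≤ D + (q ^ (N + l)).natDegree := natDegree_mul_le_of_le hp le_rfl
    _ = (q ^ (N + l - N)).natDegree + (D + N * q.natDegree) := by
        rw [natDegree_pow, natDegree_pow, Nat.add_sub_cancel_left]
        ring

variable {K : Type*} [Field K]

theorem not_nearlyAssociated_pow {E m n : ℕ} {p q : K[X]}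
    (hpq : m = n ∧ ¬ Associated p q ∨ MulIndep p q) (hm : E + 2 * E * q.natDegree < m)
    (hn : n ≠ 0) : ¬ NearlyAssociated E (p ^ m) (q ^ n) := by
  intro h
  rcases hpq with ⟨rfl, hassoc⟩ | hindep
  · exact hassoc (h.associated_of_pow (by omega))
  · have := h.le_of_mulIndep hn hindep
    omega

variable [CharZero K]

theorem exists_natDegree_le_natDegree_expPoly_add {γ : ι → K[X]} {A : ι → K[X][X]} {i₀ : ι}
    (hγ : γ i₀ ≠ 0) (hA : A i₀ ≠ 0) :
    ∃ c₀ C, ∀ k : ι → ℕ, (∀ i, c₀ < k i) →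
      (∀ i ≠ i₀, k i₀ = k i ∧ ¬ Associated (γ i₀) (γ i) ∨ MulIndep (γ i₀) (γ i)) →
      expPoly γ A k ≠ 0 ∧ k i₀ * (γ i₀).natDegree ≤ (expPoly γ A k).natDegree + C := by
  choose D hD using fun i => exists_natDegree_eval_natCast_le (A i)
  obtain ⟨c, hc⟩ := exists_forall_eval_natCast_ne_zero hA
  let N := Fintype.card ι
  let B := ∑ i, (D i + N * (γ i).natDegree)
  let E := (N + 1) * B
  let S := ∑ i, 2 * E * (γ i).natDegree
  refine ⟨c + N + E + S, E, fun k hk hγγ => ?_⟩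
  have hdeg : ∀ i, ((A i).eval (k i : K[X]) * γ i ^ k i).natDegree ≤
      (γ i ^ (k i - N)).natDegree + B := by
    intro i
    have hkN : N ≤ k i := by have := hk i; omega
    refine (natDegree_mul_pow_le_natDegree_pow_sub_add (hD i _) hkN).trans
      (Nat.add_le_add_left ?_ _)
    exact Finset.single_le_sum_of_canonicallyOrdered
      (f := fun i => D i + N * (γ i).natDegree) (Finset.mem_univ i)
  have hnear : ∀ i ≠ i₀, ¬ NearlyAssociated E (γ i₀ ^ (k i₀ - N)) (γ i ^ (k i - N)) := by
    intro i hi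
    have hS : 2 * E * (γ i).natDegree ≤ S := Finset.single_le_sum_of_canonicallyOrdered
      (f := fun i => 2 * E * (γ i).natDegree) (Finset.mem_univ i)
    have hk₀ := hk i₀
    have hki := hk i
    exact not_nearlyAssociated_pow ((hγγ i hi).imp_left (And.imp_left (congrArg (· - N))))
      (by omega) (by omega)
  have hcoeff : (A i₀).eval (k i₀ : K[X]) ≠ 0 := hc _ (by have := hk i₀; omega)
  have hpow : γ i₀ ^ k i₀ ≠ 0 := pow_ne_zero _ hγ
  obtain ⟨hne, hle⟩ := natDegree_le_natDegree_sum_add (g := fun i => γ i ^ (k i - N))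
    (fun i j hj => pow_sub_dvd_iterate_derivative_mul_pow _ _ hj.le _) hdeg
    (mul_ne_zero hcoeff hpow) hnear
  rw [natDegree_mul hcoeff hpow, natDegree_pow] at hle
  exact ⟨hne, (Nat.le_add_left _ _).trans hle⟩

theorem stmt_2_general {κ : Type*} [Fintype κ] {α : ι → K[X]} {A : ι → K[X][X]} {β : κ → K[X]}
    (B : κ → K[X][X]) {i₀ : ι} (hα₀ : α i₀ ≠ 0) (hA₀ : A i₀ ≠ 0)
    (hα : ∀ i ≠ i₀, ¬ Associated (α i₀) (α i)) (hαβ : ∀ j, MulIndep (α i₀) (β j))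
    (hdeg : ∀ i, (α i).degree ≤ (α i₀).degree) {a : K[X]} (ha : a ≠ 0) (b : K[X]) :
    ∃ c₀ C : ℕ, ∀ n m : ℕ, c₀ < min n m →
      (expPoly α A fun _ => n).degree ≤
        (a * (expPoly α A fun _ => n) - b * (expPoly β B fun _ => m)).degree + C := by
  obtain ⟨D, hD⟩ := exists_natDegree_expPoly_le (fun i => natDegree_le_natDegree (hdeg i)) A
  obtain ⟨c₀, C, hC⟩ := exists_natDegree_le_natDegree_expPoly_add (i₀ := Sum.inl i₀)
    (γ := Sum.elim α β) (A := Sum.elim (fun i => .C a * A i) fun j => -(.C b * B j)) hα₀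
    (mul_ne_zero (C_ne_zero.mpr ha) hA₀)
  refine ⟨c₀, C + D, fun n m hnm => ?_⟩
  obtain ⟨hne, hle⟩ := hC (Sum.elim (fun _ => n) fun _ => m)
    (by rintro (i | j) <;> simp only [Sum.elim_inl, Sum.elim_inr] <;> omega)
    (by
      rintro (i | j) hij
      · exact .inl ⟨rfl, hα i (ne_of_apply_ne Sum.inl hij)⟩
      · exact .inr (hαβ j))
  have hcombine : expPoly (Sum.elim α β) (Sum.elim (fun i => .C a * A i) fun j => -(.C b * B j))
      (Sum.elim (fun _ => n) fun _ => m) =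
        a * (expPoly α A fun _ => n) - b * (expPoly β B fun _ => m) := by
    simp [expPoly, Fintype.sum_sum_type, Finset.mul_sum, mul_assoc, sub_eq_add_neg]
  rw [hcombine] at hne hle
  have hdeg_expPoly := (hD n).trans (Nat.add_le_add_right hle D)
  rw [degree_eq_natDegree hne, ← Nat.cast_add, ← add_assoc]
  exact degree_le_of_natDegree_le hdeg_expPoly

end ExpPoly

section Complex

theorem ratIsConst_div_of_associated {p q : ℂ[X]} (hq : q ≠ 0) (h : Associated p q) :
    RatIsConst (algebraMap ℂ[X] (RatFunc ℂ) p / algebraMap ℂ[X] (RatFunc ℂ) q) := by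
  obtain ⟨u, rfl⟩ := h.symm
  obtain ⟨c, -, hc⟩ := isUnit_iff.mp u.isUnit
  refine ⟨c, ?_⟩
  rw [map_mul, mul_div_cancel_left₀ _ (RatFunc.algebraMap_ne_zero hq), ← hc, RatFunc.algebraMap_C]

theorem PolyMultIndep.mulIndep {p q : ℂ[X]} (hp : p ≠ 0) (h : PolyMultIndep p q) :
    MulIndep p q := by
  intro m n hmn
  have hconst := ratIsConst_div_of_associated (pow_ne_zero m hp) hmn.symm
  have hrel := h (-m) n (by
    rwa [zpow_neg, zpow_natCast, zpow_natCast, ← map_pow, ← map_pow, mul_comm, ← div_eq_mul_inv])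
  omega

end Complex

theorem stmt_2
    (d t : ℕ)
    -- the characteristic roots (polynomials) and coefficients
    -- (the `A i`, `B j` are polynomials in `n` with coefficients in `ℂ[x]`)
    (α : Fin (d + 1) → Polynomial ℂ) (A : Fin (d + 1) → Polynomial (Polynomial ℂ))
    (β : Fin (t + 1) → Polynomial ℂ) (B : Fin (t + 1) → Polynomial (Polynomial ℂ))
    (hα0 : ∀ i, α i ≠ 0) (hA0 : ∀ i, A i ≠ 0)
    (hβ0 : ∀ j, β j ≠ 0) (hB0 : ∀ j, B j ≠ 0)
    (hαinj : Function.Injective α) (hβinj : Function.Injective β)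
    -- non-degeneracy: no ratio of distinct roots is constant
    (hGnd : ∀ i j, i ≠ j → ¬ RatIsConst
      (algebraMap (Polynomial ℂ) (RatFunc ℂ) (α i) / algebraMap (Polynomial ℂ) (RatFunc ℂ) (α j)))
    (hHnd : ∀ i j, i ≠ j → ¬ RatIsConst
      (algebraMap (Polynomial ℂ) (RatFunc ℂ) (β i) / algebraMap (Polynomial ℂ) (RatFunc ℂ) (β j)))
    -- `α₁ ∉ ℂ`
    (hα1 : ∀ c : ℂ, α 0 ≠ Polynomial.C c)
    -- `(α₁, βⱼ)` multiplicatively independent for all `j`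
    (hindep : ∀ j, PolyMultIndep (α 0) (β j))
    -- `deg α₁ ≥ deg αᵢ` for all `i`
    (hdeg : ∀ i, (α i).degree ≤ (α 0).degree)
    (a b : Polynomial ℂ) (ha : a ≠ 0) (hb : b ≠ 0)
    (G H : ℕ → Polynomial ℂ)
    (hG : ∀ n : ℕ, G n = ∑ i, (A i).eval (n : Polynomial ℂ) * α i ^ n)
    (hH : ∀ m : ℕ, H m = ∑ j, (B j).eval (m : Polynomial ℂ) * β j ^ m) :
    ∃ c₀ : ℕ, ∃ C : ℕ, ∀ n m : ℕ, c₀ < min n m →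
      (G n).degree ≤ (a * G n - b * H m).degree + (C : WithBot ℕ) := by
  obtain rfl : G = fun n => expPoly α A fun _ => n := funext hG
  obtain rfl : H = fun m => expPoly β B fun _ => m := funext hH
  exact stmt_2_general B (hα0 0) (hA0 0)
    (fun i hi h => hGnd 0 i hi.symm (ratIsConst_div_of_associated (hα0 i) h))
    (fun j => (hindep j).mulIndep (hα0 0)) hdeg ha b
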